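/- Fix n ≥ 6. Let G = A_{n−1} be the anticycle on [n−1] and let F be the star on [n] with edges {i, n} for 1 ≤ i ≤ n−3. Then the product ideal I_G · I_F has linear quotients via the ordering of its minimal monomial generators given by decreasing lexicographic order induced by x_n > x_{n−1} > … > x_1. -/

import Mathlib

open MvPolynomial

noncomputable section

/-- The edge ideal of a finite simple graph on vertex set `Fin n`
(vertex with index `v` corresponds to the vertex `v+1` of `[n]`). -/
def edgeIdeal (K : Type*) [Field K] {n : ℕ} (G : SimpleGraph (Fin n)) :
    Ideal (MvPolynomial (Fin n) K) :=
  Ideal.span {p | ∃ i j : Fin n, G.Adj i j ∧ p = X i * X j}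

/-- `d` is the exponent vector of a minimal monomial generator of `I`. -/
def IsMinGen {K : Type*} [Field K] {n : ℕ} (I : Ideal (MvPolynomial (Fin n) K))
    (d : Fin n →₀ ℕ) : Prop :=
  monomial d (1 : K) ∈ I ∧
    ∀ e : Fin n →₀ ℕ, e ≤ d → e ≠ d → monomial e (1 : K) ∉ I

/-- A list of exponent vectors `L = [d_1, …, d_r]` is a linear quotient ordering if
for every `i ≥ 2` the colon ideal `(x^{d_1}, …, x^{d_{i-1}}) : x^{d_i}` is generated
by a subset of the variables. -/
def IsLinQuotOrder (K : Type*) [Field K] {n : ℕ} (L : List (Fin n →₀ ℕ)) : Prop :=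
  ∀ i : Fin L.length, 0 < i.val →
    ∃ V : Set (Fin n),
      Submodule.colon
        (Ideal.span {m : MvPolynomial (Fin n) K |
          ∃ k : Fin L.length, k.val < i.val ∧ m = monomial (L.get k) 1})
        (Ideal.span {monomial (L.get i) (1 : K)}) =
      Ideal.span ((fun v : Fin n => (X v : MvPolynomial (Fin n) K)) '' V)

/-- A monomial ideal has linear quotients if it is principal or admits a
linear quotient ordering of its minimal monomial generators. -/
def HasLinearQuotients {K : Type*} [Field K] {n : ℕ}
    (I : Ideal (MvPolynomial (Fin n) K)) : Prop :=
  (∃ p, I = Ideal.span {p}) ∨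
    ∃ L : List (Fin n →₀ ℕ), L.Nodup ∧ (∀ d, d ∈ L ↔ IsMinGen I d) ∧ IsLinQuotOrder K L

/-- `lexLt d e` : the monomial `x^d` is lexicographically smaller than `x^e`
for the lexicographic order induced by `x_n > x_{n-1} > … > x_1`. -/
def lexLt {n : ℕ} (d e : Fin n →₀ ℕ) : Prop :=
  ∃ k : Fin n, d k < e k ∧ ∀ m : Fin n, k < m → d m = e m

/-- `L` lists the minimal monomial generators of `I` in decreasing lexicographic order. -/
def LexDecMinGenOrder {K : Type*} [Field K] {n : ℕ} (I : Ideal (MvPolynomial (Fin n) K))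
    (L : List (Fin n →₀ ℕ)) : Prop :=
  List.Pairwise (fun d e => lexLt e d) L ∧ ∀ d, d ∈ L ↔ IsMinGen I d

/-- The anticycle on `[m]` : `{i,j}` is an edge iff `i ≠ j` and `i - j ≢ ±1 (mod m)`. -/
def anticycle (m : ℕ) : SimpleGraph (Fin m) where
  Adj i j := i ≠ j ∧ (i.val + 1) % m ≠ j.val ∧ (j.val + 1) % m ≠ i.val
  symm := ⟨fun i j h => ⟨h.1.symm, h.2.2, h.2.1⟩⟩
  loopless := ⟨fun i h => h.1 rfl⟩

/-- The anticycle on `[m]` regarded as a graph on the vertex set `[n]`. -/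
def anticycleIn (n m : ℕ) : SimpleGraph (Fin n) where
  Adj i j := i ≠ j ∧ i.val < m ∧ j.val < m ∧ (i.val + 1) % m ≠ j.val ∧ (j.val + 1) % m ≠ i.val
  symm := ⟨fun i j h => ⟨h.1.symm, h.2.2.1, h.2.1, h.2.2.2.2, h.2.2.2.1⟩⟩
  loopless := ⟨fun i h => h.1 rfl⟩

/-- The star on `[n]` with edges `{i, n}` for `1 ≤ i ≤ n - 3`
(in the `0`-indexed picture: edges `{i, n-1}` for `i ≤ n - 4`). -/
def starF (n : ℕ) : SimpleGraph (Fin n) :=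
  SimpleGraph.fromRel (fun i j => i.val + 4 ≤ n ∧ j.val = n - 1)

/-- `AgreeOrder n s i j t` : the degree-`s` monomials with ascending (0-indexed)
index sequences `i` and `j` agree in order `t`. -/
def AgreeOrder (n s : ℕ) (i j : ℕ → Fin n) (t : ℕ) : Prop :=
  if t = 0 then j (s - 1) < i (s - 1)
  else (∀ l, s - t ≤ l → l ≤ s - 1 → i l = j l) ∧ i (s - t - 1) ≠ j (s - t - 1)

/-!
Index the variables from `0` and let `x_m`, `m = n - 1`, be the centre of the star. A generator of
the product is `x_p x_q x_r x_m` with `p ≤ q ≤ r`; all generators have degree `4`, so all of them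
are minimal, and comparing two of them lexicographically means comparing `(r, q, p)`.

Let `v <_lex u` be generators. Linear quotients follow once some variable of `v` can be replaced by
a larger `x_k`, of higher exponent in `u` than in `v`, so that the result `w` is again a generator:
then `v <_lex w`, so `x_k` lies in the colon ideal at `v`, and `x_k` divides `u / gcd(u, v)`.

At the last position where the sorted triples of `v` and `u` differ, put the index of `u` in place
of that of `v`. This fails only when it would give `x_0^2 x_{m-1} x_m`, as `{0, m-1}` is not an edge
of the anticycle. Then `v = x_0^2 x_r x_m`, and one replaces instead `x_0` by `x_{m-1}` when `r` is
a leaf, and `x_0` by the middle variable of `u` when `r = m - 2`.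
-/

section MonomialIdeals

variable {σ R : Type*} [CommSemiring R]

theorem colon_span_monomial_eq_span_X {S : Set (σ →₀ ℕ)} {d : σ →₀ ℕ}
    (h : ∀ s ∈ S, ∃ k, d k < s k ∧ ∃ t ∈ S, t ≤ d + Finsupp.single k 1) :
    Submodule.colon (Ideal.span ((fun s => monomial s (1 : R)) '' S))
        (Ideal.span {monomial d (1 : R)}) =
      Ideal.span (X '' {k | ∃ t ∈ S, t ≤ d + Finsupp.single k 1}) := by
  have support_mul (f : MvPolynomial σ R) :
      (f * monomial d (1 : R)).support = f.support.map (addRightEmbedding d) :=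
    AddMonoidAlgebra.support_coeff_mul_single f _ (by simp) _
  ext f
  simp only [Ideal.mem_colon_span_singleton, mem_ideal_span_monomial_image,
    mem_ideal_span_X_image, support_mul, Finset.forall_mem_map, addRightEmbedding_apply]
  refine forall₂_congr fun e _ => ⟨?_, ?_⟩
  · rintro ⟨s, hs, hse⟩
    obtain ⟨k, hk, t, ht, htk⟩ := h s hs
    have := hse k
    simp only [Finsupp.add_apply] at this
    exact ⟨k, ⟨t, ht, htk⟩, by omega⟩
  · rintro ⟨k, ⟨t, ht, htk⟩, hek⟩
    have single_le : Finsupp.single k 1 ≤ e :=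
      Finsupp.single_le_iff.2 (Nat.one_le_iff_ne_zero.2 hek)
    exact ⟨t, ht, htk.trans (by rw [add_comm]; gcongr)⟩

theorem span_monomial_mul_span_monomial (S T : Set (σ →₀ ℕ)) :
    Ideal.span ((fun s => monomial s (1 : R)) '' S) *
        Ideal.span ((fun s => monomial s (1 : R)) '' T) =
      Ideal.span ((fun s => monomial s (1 : R)) '' Set.image2 (· + ·) S T) := by
  rw [Ideal.span_mul_span', ← Set.image2_mul, Set.image2_image_left, Set.image2_image_right,
    Set.image_image2]
  simp only [monomial_mul, one_mul]

end MonomialIdeals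

theorem isAntichain_of_degree_eq {σ : Type*} {T : Set (σ →₀ ℕ)} {N : ℕ}
    (hT : ∀ d ∈ T, d.degree = N) : IsAntichain (· ≤ ·) T := by
  intro d hd e he hne hle
  obtain ⟨f, rfl⟩ := exists_add_of_le hle
  have hf : f.degree = 0 := by
    have := hT _ he
    rw [map_add, hT d hd] at this
    omega
  simp [(Finsupp.degree_eq_zero_iff f).1 hf] at hne

section LexOrder

variable {n : ℕ} {d e : Fin n →₀ ℕ}

theorem lexLt_iff_toColex_lt : lexLt d e ↔ toColex d < toColex e := by
  rw [Finsupp.Colex.lt_iff]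
  exact exists_congr fun _ => and_comm

theorem lexLt_asymm (h : lexLt d e) : ¬ lexLt e d := by
  rw [lexLt_iff_toColex_lt] at *
  exact h.asymm

theorem lexLt_trichotomy (d e : Fin n →₀ ℕ) : lexLt d e ∨ d = e ∨ lexLt e d := by
  rw [lexLt_iff_toColex_lt, lexLt_iff_toColex_lt, ← toColex_inj]
  exact lt_trichotomy _ _

theorem add_lexLt_add_iff_left (f : Fin n →₀ ℕ) : lexLt (f + d) (f + e) ↔ lexLt d e := by
  simp [lexLt]

theorem add_lexLt_add_iff_right (f : Fin n →₀ ℕ) : lexLt (d + f) (e + f) ↔ lexLt d e := by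
  simp [lexLt]

theorem single_lexLt_single {j k : Fin n} (hjk : j < k) :
    lexLt (Finsupp.single j 1) (Finsupp.single k 1) :=
  lexLt_iff_toColex_lt.2 (Finsupp.Colex.single_lt_iff.2 hjk)

theorem lexLt_of_forall_ge_eq_zero {r : Fin n} (hd : ∀ m, r ≤ m → d m = 0) (he : e r ≠ 0) :
    lexLt d e := by
  rcases lexLt_trichotomy d e with h | rfl | ⟨k, hk, hk'⟩
  · exact h
  · exact absurd (hd r le_rfl) he
  · have hkr : k < r := not_le.1 fun hrk => by simp [hd k hrk] at hk
    exact absurd ((hk' r hkr).trans (hd r le_rfl)) he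

theorem lt_or_eq_and_lexLt_of_add_single_lexLt {r s : Fin n} (he : ∀ m, s < m → e m = 0)
    (h : lexLt (d + Finsupp.single r 1) (e + Finsupp.single s 1)) :
    r < s ∨ r = s ∧ lexLt d e := by
  rcases lt_trichotomy r s with hrs | rfl | hsr
  · exact .inl hrs
  · exact .inr ⟨rfl, (add_lexLt_add_iff_right _).1 h⟩
  · refine absurd (lexLt_of_forall_ge_eq_zero (r := r) (fun m hm => ?_) ?_) (lexLt_asymm h)
    · have hsm := hsr.trans_le hm
      simp [he m hsm, hsm.ne']
    · simp

theorem exists_list_pairwise_lexLt {T : Set (Fin n →₀ ℕ)} (hT : T.Finite) :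
    ∃ L : List (Fin n →₀ ℕ), L.Pairwise (fun d e => lexLt e d) ∧ ∀ d, d ∈ L ↔ d ∈ T := by
  let S : Finset (Colex (Fin n →₀ ℕ)) := hT.toFinset.map toColex.toEmbedding
  refine ⟨(S.sort (· ≥ ·)).map ofColex, ?_, fun d => by simp [S]⟩
  simp only [List.pairwise_map, lexLt_iff_toColex_lt, toColex_ofColex]
  exact S.sortedGT_sort.pairwise

end LexOrder

section LinearQuotients

variable {K : Type*} [Field K] {n : ℕ}

/-- The generator `x^v` can be moved towards `x^u` inside `T`: some variable dividing `x^v` can be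
replaced by a larger variable that occurs in `x^u` with a higher exponent than in `x^v`. -/
def RaisesToward (T : Set (Fin n →₀ ℕ)) (v u : Fin n →₀ ℕ) : Prop :=
  ∃ (f : Fin n →₀ ℕ) (j k : Fin n), v = f + Finsupp.single j 1 ∧ j < k ∧ v k < u k ∧
    f + Finsupp.single k 1 ∈ T

/-- The exchange property for lexicographic linear quotients: a generator can be moved inside `T`
towards each lexicographically larger one. -/
def LexExchange (T : Set (Fin n →₀ ℕ)) : Prop :=
  ∀ v ∈ T, ∀ u ∈ T, lexLt v u → RaisesToward T v u

theorem LexExchange.isLinQuotOrder {T : Set (Fin n →₀ ℕ)} (hT : LexExchange T)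
    {L : List (Fin n →₀ ℕ)} (hL : L.Pairwise fun d e => lexLt e d) (hmem : ∀ d, d ∈ L ↔ d ∈ T) :
    IsLinQuotOrder K L := by
  intro i _
  have lexLt_get (j k : Fin L.length) (h : j < k) : lexLt (L.get k) (L.get j) :=
    List.pairwise_iff_get.1 hL j k h
  have earlier_eq : {m : MvPolynomial (Fin n) K |
      ∃ k : Fin L.length, k.val < i.val ∧ m = monomial (L.get k) 1} =
      (fun s => monomial s (1 : K)) '' (L.get '' Set.Iio i) := by
    ext m
    simp [eq_comm]
  rw [earlier_eq]
  refine ⟨_, colon_span_monomial_eq_span_X ?_⟩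
  rintro _ ⟨j, hji, rfl⟩
  obtain ⟨f, a, k, hf, hak, hk, hfk⟩ :=
    hT _ ((hmem _).1 (L.get_mem i)) _ ((hmem _).1 (L.get_mem j)) (lexLt_get j i hji)
  obtain ⟨t, ht⟩ := List.get_of_mem ((hmem _).2 hfk)
  refine ⟨k, hk, L.get t, ⟨t, ?_, rfl⟩, ?_⟩
  · have raised : lexLt (L.get i) (L.get t) := by
      rw [hf, ht, add_lexLt_add_iff_left]
      exact single_lexLt_single hak
    rcases lt_trichotomy t i with h | rfl | h
    · exact h
    · exact absurd raised (lexLt_asymm raised)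
    · exact absurd raised (lexLt_asymm (lexLt_get i t h))
  · rw [ht, hf]
    gcongr
    exact le_self_add

theorem isMinGen_span_monomial_iff {T : Set (Fin n →₀ ℕ)} (hT : IsAntichain (· ≤ ·) T)
    {d : Fin n →₀ ℕ} :
    IsMinGen (Ideal.span ((fun s => monomial s (1 : K)) '' T)) d ↔ d ∈ T := by
  have monomial_mem (e : Fin n →₀ ℕ) :
      monomial e (1 : K) ∈ Ideal.span ((fun s => monomial s (1 : K)) '' T) ↔ ∃ t ∈ T, t ≤ e := by
    classical
    simp [mem_ideal_span_monomial_image, support_monomial]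
  simp only [IsMinGen, monomial_mem]
  constructor
  · rintro ⟨⟨t, ht, htd⟩, hmin⟩
    have : t = d := not_not.1 fun hne => hmin t htd hne ⟨t, ht, le_rfl⟩
    exact this ▸ ht
  · refine fun hd => ⟨⟨d, hd, le_rfl⟩, ?_⟩
    rintro e hed hne ⟨t, ht, hte⟩
    have htd : t = d := hT.eq ht hd (hte.trans hed)
    exact hne (le_antisymm hed (htd ▸ hte))

theorem LexExchange.exists_lexDec_linQuotOrder {T : Set (Fin n →₀ ℕ)} (hT : LexExchange T)
    (hanti : IsAntichain (· ≤ ·) T) :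
    ∃ L : List (Fin n →₀ ℕ),
      LexDecMinGenOrder (Ideal.span ((fun s => monomial s (1 : K)) '' T)) L ∧
      IsLinQuotOrder K L := by
  have hfin : T.Finite := WellQuasiOrderedLE.finite_of_isAntichain hanti
  obtain ⟨L, hL, hmem⟩ := exists_list_pairwise_lexLt hfin
  exact ⟨L, ⟨hL, fun d => (hmem d).trans (isMinGen_span_monomial_iff hanti).symm⟩,
    hT.isLinQuotOrder hL hmem⟩

end LinearQuotients

section EdgeIdeals

variable {n : ℕ}

/-- The exponent vectors of the monomials `x_i x_j` with `{i, j}` an edge of `G`. -/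
def edgeExponents (G : SimpleGraph (Fin n)) : Set (Fin n →₀ ℕ) :=
  {d | ∃ i j, G.Adj i j ∧ d = Finsupp.single i 1 + Finsupp.single j 1}

theorem edgeIdeal_eq_span_monomial (K : Type*) [Field K] (G : SimpleGraph (Fin n)) :
    edgeIdeal K G = Ideal.span ((fun s => monomial s (1 : K)) '' edgeExponents G) := by
  have X_mul_X (i j : Fin n) : (X i * X j : MvPolynomial (Fin n) K) =
      monomial (Finsupp.single i 1 + Finsupp.single j 1) 1 := by
    simp only [X, monomial_mul, mul_one]
  rw [edgeIdeal]
  congr 1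
  ext p
  constructor
  · rintro ⟨i, j, hij, rfl⟩
    exact ⟨_, ⟨i, j, hij, rfl⟩, (X_mul_X i j).symm⟩
  · rintro ⟨_, ⟨i, j, hij, rfl⟩, rfl⟩
    exact ⟨i, j, hij, (X_mul_X i j).symm⟩

theorem edgeExponents_eq_of_adj_iff {G : SimpleGraph (Fin n)} {P : Fin n → Fin n → Prop}
    (hG : ∀ i j, G.Adj i j ↔ P i j ∨ P j i) :
    edgeExponents G = {d | ∃ i j, P i j ∧ d = Finsupp.single i 1 + Finsupp.single j 1} := by
  ext d
  constructor
  · rintro ⟨i, j, hij, rfl⟩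
    rcases (hG i j).1 hij with h | h
    · exact ⟨i, j, h, rfl⟩
    · exact ⟨j, i, h, add_comm _ _⟩
  · rintro ⟨i, j, hij, rfl⟩
    exact ⟨i, j, (hG i j).2 (.inl hij), rfl⟩

end EdgeIdeals

section AnticycleStar

variable {m : ℕ}

theorem anticycleIn_adj_iff (i j : Fin (m + 1)) :
    (anticycleIn (m + 1) m).Adj i j ↔
      (i.val + 2 ≤ j.val ∧ j.val < m ∧ ¬ (i.val = 0 ∧ j.val + 1 = m)) ∨
      (j.val + 2 ≤ i.val ∧ i.val < m ∧ ¬ (j.val = 0 ∧ i.val + 1 = m)) := by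
  have succ_mod (a : ℕ) (ha : a < m) : (a + 1) % m = if a + 1 = m then 0 else a + 1 := by
    split_ifs with h
    · rw [h, Nat.mod_self]
    · exact Nat.mod_eq_of_lt (by omega)
  by_cases h : i.val < m ∧ j.val < m
  · simp only [anticycleIn, succ_mod _ h.1, succ_mod _ h.2, ne_eq, Fin.ext_iff]
    split_ifs <;> omega
  · simp only [anticycleIn]
    omega

theorem starF_adj_iff (i j : Fin (m + 1)) :
    (starF (m + 1)).Adj i j ↔
      (i.val + 3 ≤ m ∧ j = Fin.last m) ∨ (j.val + 3 ≤ m ∧ i = Fin.last m) := by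
  simp only [starF, SimpleGraph.fromRel_adj, Fin.ext_iff, Fin.val_last, ne_eq]
  omega

/-- The exponent vector of `x_p x_q x_r x_c`, where `c = Fin.last m` is the centre of the star. -/
def genExponent (p q r : Fin (m + 1)) : Fin (m + 1) →₀ ℕ :=
  Finsupp.single p 1 + Finsupp.single q 1 + Finsupp.single r 1 + Finsupp.single (Fin.last m) 1

/-- Describes the sorted triples `p ≤ q ≤ r` obtained from a leaf of the star and an edge of the
anticycle on `{0, …, m - 1}`; the alternatives tell whether `r` is a leaf, `m - 2` or `m - 1`. -/
def IsGenTriple (m p q r : ℕ) : Prop :=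
  p ≤ q ∧ q ≤ r ∧
    ((r + 3 ≤ m ∧ p + 2 ≤ r) ∨
      (r + 2 = m ∧ q + 3 ≤ m ∧ p + 3 ≠ m) ∨
      (r + 1 = m ∧ q + 3 ≤ m ∧ q ≠ 0))

variable (m) in
/-- The exponent vectors of the minimal generators of the product of the edge ideals of the
anticycle and the star. -/
def genExponents : Set (Fin (m + 1) →₀ ℕ) :=
  {d | ∃ p q r : Fin (m + 1), IsGenTriple m p q r ∧ d = genExponent p q r}

theorem genExponent_swap_right (p q r : Fin (m + 1)) : genExponent p q r = genExponent p r q := by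
  simp only [genExponent, add_right_comm]

theorem genExponent_rotate (p q r : Fin (m + 1)) : genExponent p q r = genExponent q r p := by
  simp only [genExponent]
  abel

theorem degree_of_mem_genExponents {d : Fin (m + 1) →₀ ℕ} (hd : d ∈ genExponents m) :
    d.degree = 4 := by
  obtain ⟨p, q, r, -, rfl⟩ := hd
  simp [genExponent]

theorem genExponent_mem_of_edge_of_leaf {a b c : Fin (m + 1)} (hab : a.val + 2 ≤ b.val)
    (hb : b.val < m) (hwrap : ¬ (a.val = 0 ∧ b.val + 1 = m)) (hc : c.val + 3 ≤ m) :
    genExponent a b c ∈ genExponents m := by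
  rcases lt_or_ge c.val a.val with hca | hac
  · exact ⟨c, a, b, by unfold IsGenTriple; omega, (genExponent_rotate c a b).symm⟩
  rcases lt_or_ge c.val b.val with hcb | hbc
  · exact ⟨a, c, b, by unfold IsGenTriple; omega, genExponent_swap_right a b c⟩
  · exact ⟨a, b, c, by unfold IsGenTriple; omega, rfl⟩

theorem IsGenTriple.exists_edge_leaf {p q r : Fin (m + 1)} (h : IsGenTriple m p q r) :
    ∃ a b c : Fin (m + 1),
      (a.val + 2 ≤ b.val ∧ b.val < m ∧ ¬ (a.val = 0 ∧ b.val + 1 = m)) ∧ c.val + 3 ≤ m ∧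
      genExponent p q r = genExponent a b c := by
  unfold IsGenTriple at h
  by_cases hr : r.val + 1 = m
  · exact ⟨q, r, p, by omega, by omega, genExponent_rotate p q r⟩
  · exact ⟨p, r, q, by omega, by omega, genExponent_swap_right p q r⟩

theorem image2_add_edgeExponents :
    Set.image2 (· + ·) (edgeExponents (anticycleIn (m + 1) m)) (edgeExponents (starF (m + 1))) =
      genExponents m := by
  rw [edgeExponents_eq_of_adj_iff anticycleIn_adj_iff, edgeExponents_eq_of_adj_iff starF_adj_iff]
  ext d
  constructor
  · rintro ⟨_, ⟨a, b, ⟨hab, hb, hwrap⟩, rfl⟩, _, ⟨c, _, ⟨hc, rfl⟩, rfl⟩, rfl⟩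
    simpa only [genExponent, add_assoc] using genExponent_mem_of_edge_of_leaf hab hb hwrap hc
  · rintro ⟨p, q, r, h, rfl⟩
    obtain ⟨a, b, c, hab, hc, habc⟩ := h.exists_edge_leaf
    exact ⟨_, ⟨a, b, hab, rfl⟩, _, ⟨c, _, ⟨hc, rfl⟩, rfl⟩, by
      rw [habc]
      simp only [genExponent, add_assoc]⟩

theorem edgeIdeal_anticycleIn_mul_edgeIdeal_starF (K : Type*) [Field K] (m : ℕ) :
    edgeIdeal K (anticycleIn (m + 1) m) * edgeIdeal K (starF (m + 1)) =
      Ideal.span ((fun s => monomial s (1 : K)) '' genExponents m) := by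
  rw [edgeIdeal_eq_span_monomial, edgeIdeal_eq_span_monomial, span_monomial_mul_span_monomial,
    image2_add_edgeExponents]

theorem lt_of_genExponent_lexLt {p q r p' q' r' : Fin (m + 1)} (hpq : p' ≤ q') (hqr : q' ≤ r')
    (h : lexLt (genExponent p q r) (genExponent p' q' r')) :
    r < r' ∨ r = r' ∧ (q < q' ∨ q = q' ∧ p < p') := by
  rw [genExponent, genExponent, add_lexLt_add_iff_right] at h
  refine (lt_or_eq_and_lexLt_of_add_single_lexLt (fun k hk => ?_) h).imp_right
    (And.imp_right fun h => ?_)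
  · simp [(hqr.trans_lt hk).ne', ((hpq.trans hqr).trans_lt hk).ne']
  refine (lt_or_eq_and_lexLt_of_add_single_lexLt (fun k hk => ?_) h).imp_right
    (And.imp_right fun h => ?_)
  · simp [(hpq.trans_lt hk).ne']
  rw [← zero_add (Finsupp.single p 1), ← zero_add (Finsupp.single p' 1)] at h
  rcases lt_or_eq_and_lexLt_of_add_single_lexLt (by simp) h with h | ⟨-, h⟩
  · exact h
  · exact absurd h (lexLt_asymm h)

section Exchange

variable {p q r p' q' r' : Fin (m + 1)}

theorem raisesToward_of_replace {j k : Fin (m + 1)} {u : Fin (m + 1) →₀ ℕ} (hjk : j < k)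
    (hk : genExponent p q j k < u k) (hmem : genExponent p q k ∈ genExponents m) :
    RaisesToward (genExponents m) (genExponent p q j) u := by
  refine ⟨Finsupp.single p 1 + Finsupp.single q 1 + Finsupp.single (Fin.last m) 1, j, k,
    add_right_comm _ _ _, hjk, hk, ?_⟩
  rwa [add_right_comm]

theorem genExponent_apply_lt_of_forall_ne {k : Fin (m + 1)} (hp : p ≠ k) (hq : q ≠ k) (hr : r ≠ k)
    (hlast : k ≠ Fin.last m) (hk : k = p' ∨ k = q' ∨ k = r') :
    genExponent p q r k < genExponent p' q' r' k := by
  have hv : genExponent p q r k = 0 := by simp [genExponent, hp.symm, hq.symm, hr.symm, hlast]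
  rw [hv]
  rcases hk with rfl | rfl | rfl <;> simp [genExponent]

theorem raisesToward_of_max_lt (hv : IsGenTriple m p q r) (hu : IsGenTriple m p' q' r')
    (h : r < r') : RaisesToward (genExponents m) (genExponent p q r) (genExponent p' q' r') := by
  unfold IsGenTriple at hv hu
  have apply_max_lt : genExponent p q r r' < genExponent p' q' r' r' :=
    genExponent_apply_lt_of_forall_ne (by omega) (by omega) h.ne
      (by simp only [ne_eq, Fin.ext_iff, Fin.val_last]; omega) (by simp)
  by_cases wrap : r'.val + 1 = m ∧ q.val = 0
  · -- `x_0^2 x_{m-1}` is not allowed, so `x_{m-1}` cannot replace `x_r`.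
    by_cases r_leaf : r.val + 3 ≤ m
    · rw [genExponent_rotate p q r] at apply_max_lt ⊢
      exact raisesToward_of_replace (by omega) apply_max_lt
        ⟨q, r, r', by unfold IsGenTriple; omega, rfl⟩
    · have apply_mid_lt : genExponent p q r q' < genExponent p' q' r' q' :=
        genExponent_apply_lt_of_forall_ne (by omega) (by omega) (by omega)
          (by simp only [ne_eq, Fin.ext_iff, Fin.val_last]; omega) (by simp)
      rw [genExponent_swap_right p q r] at apply_mid_lt ⊢
      exact raisesToward_of_replace (by omega) apply_mid_lt
        ⟨p, q', r, by unfold IsGenTriple; omega, genExponent_swap_right _ _ _⟩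
  · exact raisesToward_of_replace h apply_max_lt ⟨p, q, r', by unfold IsGenTriple; omega, rfl⟩

theorem raisesToward_of_mid_lt (hv : IsGenTriple m p q r) (hu : IsGenTriple m p' q' r)
    (h : q < q') : RaisesToward (genExponents m) (genExponent p q r) (genExponent p' q' r) := by
  have apply_mid_lt : genExponent p q r q' < genExponent p' q' r q' := by
    have hpq' : p < q' := lt_of_le_of_lt hv.1 h
    simp [genExponent, hpq'.ne', h.ne']
  rw [genExponent_swap_right p q r] at apply_mid_lt ⊢
  refine raisesToward_of_replace h apply_mid_lt
    ⟨p, q', r, ?_, genExponent_swap_right _ _ _⟩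
  unfold IsGenTriple at *
  omega

theorem raisesToward_of_min_lt (hu : IsGenTriple m p' q r) (h : p < p') :
    RaisesToward (genExponents m) (genExponent p q r) (genExponent p' q r) := by
  have apply_min_lt : genExponent p q r p' < genExponent p' q r p' := by
    simp [genExponent, h.ne']
  rw [genExponent_rotate p q r] at apply_min_lt ⊢
  exact raisesToward_of_replace h apply_min_lt
    ⟨p', q, r, hu, (genExponent_rotate _ _ _).symm⟩

end Exchange

theorem lexExchange_genExponents (m : ℕ) : LexExchange (genExponents m) := by
  rintro _ ⟨p, q, r, hv, rfl⟩ _ ⟨p', q', r', hu, rfl⟩ hlt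
  rcases lt_of_genExponent_lexLt hu.1 hu.2.1 hlt with hr | ⟨rfl, hq | ⟨rfl, hp⟩⟩
  · exact raisesToward_of_max_lt hv hu hr
  · exact raisesToward_of_mid_lt hv hu hq
  · exact raisesToward_of_min_lt hu hp

end AnticycleStar

theorem IGIF_lex_linear_quotients_general (K : Type*) [Field K] (m : ℕ) :
    ∃ L : List (Fin (m + 1) →₀ ℕ),
      LexDecMinGenOrder (edgeIdeal K (anticycleIn (m + 1) m) * edgeIdeal K (starF (m + 1))) L ∧
      IsLinQuotOrder K L := by
  rw [edgeIdeal_anticycleIn_mul_edgeIdeal_starF]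
  exact (lexExchange_genExponents m).exists_lexDec_linQuotOrder
    (isAntichain_of_degree_eq fun _ => degree_of_mem_genExponents)

/-- Lemma `IGIF-lemma`: for `n ≥ 6`, `G = A_{n-1}` the anticycle on `[n-1]` and `F` the
star on `[n]` with edges `{i, n}`, `1 ≤ i ≤ n-3`, the product `I_G · I_F` has linear
quotients via the ordering of its minimal generators in decreasing lexicographic order
induced by `x_n > x_{n-1} > … > x_1`. -/
theorem IGIF_lex_linear_quotients
    (K : Type*) [Field K] (n : ℕ) (hn : 6 ≤ n) :
    ∃ L : List (Fin n →₀ ℕ),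
      LexDecMinGenOrder (edgeIdeal K (anticycleIn n (n - 1)) * edgeIdeal K (starF n)) L ∧
      IsLinQuotOrder K L := by
  obtain ⟨m, rfl⟩ := Nat.exists_eq_add_of_le' (show 1 ≤ n by omega)
  exact IGIF_lex_linear_quotients_general K m

end
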